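/- arXiv:2405.15091 — 2 statements merged into one kernel-verified Lean document; each statement's English description precedes it below -/
import Mathlib

section
/- Let L be a symplectic alternating algebra over a field 𝔽 of characteristic different from 2. If the multiplication of L is associative ((u·v)·w = u·(v·w) for all u, v, w ∈ L), or if L is a Lie algebra under its multiplication (the Jacobi identity (u·v)·w + (v·w)·u + (w·u)·v = 0 holds for all u, v, w ∈ L), then L³ = {0}, i.e. (u·v)·w = 0 for all u, v, w ∈ L. -/
/-!
The compatibility of form and product says that `(u·v, w)` is an alternating trilinear form, so every
right multiplication `R u : x ↦ x·u` is self-adjoint: `(x·u, y) = (x, y·u)` (`form_mul_left`).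

If the product is associative, then `R (u·v)` is `R v ∘ R u`, whose adjoint is
`R u ∘ R v = R (v·u) = -R (u·v)`. If the Jacobi identity holds, then `R (u·v)` is the commutator of
`R v` and `R u`, and the adjoint of a commutator of self-adjoint maps is its negative. In both cases
`R (u·v)` is self-adjoint and anti-self-adjoint, hence zero in characteristic different from 2.
-/

variable {𝔽 : Type*} [Field 𝔽] {L : Type*} [AddCommGroup L] [Module 𝔽 L]

structure SymplecticAlternatingAlgebra (𝔽 L : Type*) [Field 𝔽] [AddCommGroup L]
    [Module 𝔽 L] where
  form : L →ₗ[𝔽] L →ₗ[𝔽] 𝔽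
  mul : L →ₗ[𝔽] L →ₗ[𝔽] L
  form_alt : ∀ x, form x x = 0
  form_nondeg : ∀ x, (∀ y, form x y = 0) → x = 0
  mul_alt : ∀ x, mul x x = 0
  compat : ∀ u v w, form (mul u v) w = form (mul v w) u

namespace SymplecticAlternatingAlgebra

variable (S : SymplecticAlternatingAlgebra 𝔽 L)

/-- `U·V`, the span of all products `u·v`. -/
def prodSub (U V : Submodule 𝔽 L) : Submodule 𝔽 L := Submodule.map₂ S.mul U V

/-- An ideal: `I·L ⊆ I`. -/
def IsIdeal (I : Submodule 𝔽 L) : Prop := S.prodSub I ⊤ ≤ I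

/-- Orthogonal complement with respect to the form. -/
def perp (U : Submodule 𝔽 L) : Submodule 𝔽 L where
  carrier := {x | ∀ u ∈ U, S.form x u = 0}
  add_mem' := by
    intro a b ha hb u hu
    simp [map_add, ha u hu, hb u hu]
  zero_mem' := by
    intro u hu
    simp
  smul_mem' := by
    intro c a ha u hu
    simp [ha u hu]

/-- `lcs n = L^(n+1)`: the lower central series, `lcs 0 = L¹ = L`. -/
def lcs : ℕ → Submodule 𝔽 L
  | 0 => ⊤
  | n + 1 => S.prodSub (lcs n) ⊤

/-- `ucs n = Z_n(L)`: the upper central series. -/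
def ucs : ℕ → Submodule 𝔽 L
  | 0 => ⊥
  | n + 1 => ⨅ y : L, (ucs n).comap (S.mul.flip y)

/-- The center `Z(L)`. -/
def center : Submodule 𝔽 L := ⨅ y : L, LinearMap.ker (S.mul.flip y)

/-- Nilpotency: some term of the lower central series vanishes. -/
def IsNilpotent : Prop := ∃ n, S.lcs n = ⊥

/-- `s` generates `L` as an algebra: the smallest subspace containing `s`
and closed under the multiplication is `L` itself. -/
def Generates (s : Set L) : Prop :=
  ∀ M : Submodule 𝔽 L, s ⊆ (M : Set L) → S.prodSub M M ≤ M → M = ⊤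

end SymplecticAlternatingAlgebra

open SymplecticAlternatingAlgebra Module


namespace SymplecticAlternatingAlgebra

theorem form_swap (S : SymplecticAlternatingAlgebra 𝔽 L) (x y : L) :
    S.form x y = -S.form y x := by
  have h := S.form_alt (x + y)
  simp only [map_add, LinearMap.add_apply, S.form_alt, zero_add, add_zero] at h
  exact eq_neg_of_add_eq_zero_right h

theorem mul_swap (S : SymplecticAlternatingAlgebra 𝔽 L) (x y : L) :
    S.mul x y = -S.mul y x := by
  have h := S.mul_alt (x + y)
  simp only [map_add, LinearMap.add_apply, S.mul_alt, zero_add, add_zero] at h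
  exact eq_neg_of_add_eq_zero_right h

/-- Right multiplications are self-adjoint with respect to the form. -/
theorem form_mul_left (S : SymplecticAlternatingAlgebra 𝔽 L) (x u y : L) :
    S.form (S.mul x u) y = S.form x (S.mul y u) := by
  rw [S.compat, S.form_swap x, S.mul_swap u y, map_neg, LinearMap.neg_apply]

/-- If every right multiplication by a product is anti-self-adjoint, then all triple products
vanish, since right multiplications are also self-adjoint. -/
theorem cube_zero_of_antiselfadjoint (S : SymplecticAlternatingAlgebra 𝔽 L)
    (hchar : ringChar 𝔽 ≠ 2)
    (h : ∀ u v x y, S.form (S.mul x (S.mul u v)) y = -S.form x (S.mul y (S.mul u v)))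
    (u v w : L) : S.mul (S.mul u v) w = 0 := by
  rw [S.mul_swap, neg_eq_zero]
  refine S.form_nondeg _ fun y => ?_
  have h1 := h u v w y
  rw [← S.form_mul_left] at h1
  exact (Ring.eq_self_iff_eq_zero_of_char_ne_two hchar).mp h1.symm

end SymplecticAlternatingAlgebra

theorem assoc_or_lie_implies_cube_zero [FiniteDimensional 𝔽 L]
    (S : SymplecticAlternatingAlgebra 𝔽 L) (hchar : ringChar 𝔽 ≠ 2)
    (h : (∀ u v w, S.mul (S.mul u v) w = S.mul u (S.mul v w)) ∨
         (∀ u v w, S.mul (S.mul u v) w + S.mul (S.mul v w) u + S.mul (S.mul w u) v = 0)) :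
    ∀ u v w, S.mul (S.mul u v) w = 0 := by
  refine S.cube_zero_of_antiselfadjoint hchar fun u v x y => ?_
  rcases h with h | h
  · rw [← h x u v, S.form_mul_left, S.form_mul_left, h y v u, S.mul_swap v u, map_neg, map_neg]
  · -- The Jacobi identity as a formula for right multiplication by `u·v`.
    have key : ∀ z, S.mul z (S.mul u v) = S.mul (S.mul z u) v - S.mul (S.mul z v) u := by
      intro z
      have hz := h u v z
      rw [S.mul_swap (S.mul u v) z, S.mul_swap v z, map_neg, LinearMap.neg_apply] at hz
      rw [← sub_eq_zero, ← neg_eq_zero, ← hz]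
      abel
    rw [key x, key y, map_sub, map_sub, LinearMap.sub_apply]
    simp only [S.form_mul_left]
    ring
end

section
/- Let L be a nilpotent symplectic alternating algebra over a field 𝔽 with ideals I and J such that J = I + 𝔽x + 𝔽y where (x, y) = 1 and x, y ∈ I^⊥. Then J·L ⊆ I. Furthermore, if I is isotropic then J is abelian. -/
/-!
If `J = I + 𝔽x + 𝔽y` and `u ∈ L`, then `x·u = a + αx + βy` with `a ∈ I`. Pairing with `x`
gives `β = 0`, because `(x·u, x) = -(x·x, u) = 0`. Hence right multiplication by `u` acts on `x`
as the scalar `α` modulo `I`, so `αⁿx ∈ I + Lⁿ⁺¹` for all `n`; nilpotency yields `αⁿx ∈ I` for some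
`n`, and pairing with `y ∈ I^⊥` gives `α = 0`. Thus `x·u ∈ I`, and `y·u ∈ I` by symmetry; this is
`mul_mem_of_hyperbolic`.

If moreover `I` is isotropic, then `J ⊆ I^⊥`, and `(a·b, c) = (b·c, a) = 0` for `a, b ∈ J` and
`c ∈ L`, since `b·c ∈ I`. Nondegeneracy gives `a·b = 0`.
-/

variable {𝔽 : Type*} [Field 𝔽] {L : Type*} [AddCommGroup L] [Module 𝔽 L]

open SymplecticAlternatingAlgebra Module

namespace SymplecticAlternatingAlgebra

theorem form_skew (S : SymplecticAlternatingAlgebra 𝔽 L) (a b : L) :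
    S.form a b = -S.form b a := by
  have h := S.form_alt (a + b)
  simp only [map_add, LinearMap.add_apply, S.form_alt] at h
  linear_combination h

theorem mul_skew (S : SymplecticAlternatingAlgebra 𝔽 L) (a b : L) :
    S.mul a b = -S.mul b a := by
  have h := S.mul_alt (a + b)
  simp only [map_add, LinearMap.add_apply, S.mul_alt, zero_add, add_zero] at h
  exact eq_neg_of_add_eq_zero_right h

theorem form_mul_self (S : SymplecticAlternatingAlgebra 𝔽 L) (x u : L) :
    S.form (S.mul x u) x = 0 := by
  rw [S.mul_skew, map_neg, LinearMap.neg_apply, S.compat, S.mul_alt]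
  simp

/-- Only `(x, y) ≠ 0` is required, so that the roles of `x` and `y` can be exchanged without
changing a sign. -/
theorem mul_mem_of_hyperbolic (S : SymplecticAlternatingAlgebra 𝔽 L) (hnil : S.IsNilpotent)
    {I : Submodule 𝔽 L} (hI : S.IsIdeal I) {x y : L} (hxy : S.form x y ≠ 0)
    (hx : x ∈ S.perp I) (hy : y ∈ S.perp I) {u a : L} (ha : a ∈ I) {α β : 𝔽}
    (h : S.mul x u = a + α • x + β • y) : S.mul x u ∈ I := by
  have hβ : β = 0 := by
    have h1 := S.form_mul_self x u
    rw [h, S.form_skew] at h1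
    simpa [hx a ha, S.form_alt, hxy] using h1
  subst hβ
  have key : ∀ n, ∃ b ∈ I, b + α ^ n • x ∈ S.lcs n := by
    intro n
    induction n with
    | zero => exact ⟨0, I.zero_mem, Submodule.mem_top⟩
    | succ n ih =>
      obtain ⟨b, hb, hn⟩ := ih
      refine ⟨S.mul b u + α ^ n • a, I.add_mem
        (hI (Submodule.apply_mem_map₂ _ hb Submodule.mem_top)) (I.smul_mem _ ha), ?_⟩
      have hm : S.mul (b + α ^ n • x) u ∈ S.lcs (n + 1) :=
        Submodule.apply_mem_map₂ _ hn Submodule.mem_top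
      convert hm using 1
      simp only [map_add, map_smul, LinearMap.add_apply, LinearMap.smul_apply, h]
      module
  obtain ⟨n, hn⟩ := hnil
  obtain ⟨b, hb, hbn⟩ := key n
  rw [hn, Submodule.mem_bot] at hbn
  have h2 : S.form y (b + α ^ n • x) = 0 := by rw [hbn, map_zero]
  have hyx : S.form y x ≠ 0 := by
    rw [S.form_skew]
    exact neg_ne_zero.mpr hxy
  have hαn : α ^ n = 0 := by simpa [hy b hb, hyx] using h2
  have hα : α = 0 := eq_zero_of_pow_eq_zero hαn
  rw [h, hα]
  simpa using ha

end SymplecticAlternatingAlgebra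

theorem ideal_plus_hyperbolic_pair [FiniteDimensional 𝔽 L]
    (S : SymplecticAlternatingAlgebra 𝔽 L) (hnil : S.IsNilpotent)
    (I J : Submodule 𝔽 L) (hI : S.IsIdeal I) (hJ : S.IsIdeal J) (x y : L)
    (hJeq : J = I ⊔ Submodule.span 𝔽 {x} ⊔ Submodule.span 𝔽 {y})
    (hxy : S.form x y = 1) (hx : x ∈ S.perp I) (hy : y ∈ S.perp I) :
    S.prodSub J ⊤ ≤ I ∧ (I ≤ S.perp I → S.prodSub J J = ⊥) := by
  have mem_J : ∀ z ∈ J, ∃ a ∈ I, ∃ α β : 𝔽, z = a + α • x + β • y := by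
    intro z hz
    rw [hJeq] at hz
    obtain ⟨w, hw, v, hv, rfl⟩ := Submodule.mem_sup.mp hz
    obtain ⟨a, ha, t, ht, rfl⟩ := Submodule.mem_sup.mp hw
    obtain ⟨α, rfl⟩ := Submodule.mem_span_singleton.mp ht
    obtain ⟨β, rfl⟩ := Submodule.mem_span_singleton.mp hv
    exact ⟨a, ha, α, β, rfl⟩
  have hxJ : x ∈ J := by
    rw [hJeq]
    exact Submodule.mem_sup_left (Submodule.mem_sup_right (Submodule.mem_span_singleton_self x))
  have hyJ : y ∈ J := by
    rw [hJeq]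
    exact Submodule.mem_sup_right (Submodule.mem_span_singleton_self y)
  have hxy0 : S.form x y ≠ 0 := by simp [hxy]
  have hyx0 : S.form y x ≠ 0 := by simp [S.form_skew y x, hxy]
  have hxI : ∀ u, S.mul x u ∈ I := by
    intro u
    obtain ⟨a, ha, α, β, h⟩ :=
      mem_J _ (hJ (Submodule.apply_mem_map₂ S.mul hxJ (Submodule.mem_top (x := u))))
    exact S.mul_mem_of_hyperbolic hnil hI hxy0 hx hy ha h
  have hyI : ∀ u, S.mul y u ∈ I := by
    intro u
    obtain ⟨a, ha, α, β, h⟩ :=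
      mem_J _ (hJ (Submodule.apply_mem_map₂ S.mul hyJ (Submodule.mem_top (x := u))))
    exact S.mul_mem_of_hyperbolic hnil hI hyx0 hy hx ha (h.trans (add_right_comm _ _ _))
  have hJI : ∀ z ∈ J, ∀ u, S.mul z u ∈ I := by
    intro z hz u
    obtain ⟨a, ha, α, β, rfl⟩ := mem_J z hz
    simp only [map_add, map_smul, LinearMap.add_apply, LinearMap.smul_apply]
    exact I.add_mem (I.add_mem (hI (Submodule.apply_mem_map₂ _ ha Submodule.mem_top))
      (I.smul_mem _ (hxI u))) (I.smul_mem _ (hyI u))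
  refine ⟨Submodule.map₂_le.mpr fun z hz u _ => hJI z hz u, fun hiso => ?_⟩
  have hJperp : J ≤ S.perp I := by
    rw [hJeq]
    simp only [sup_le_iff, Submodule.span_singleton_le_iff_mem]
    exact ⟨⟨hiso, hx⟩, hy⟩
  refine le_bot_iff.mp (Submodule.map₂_le.mpr fun a ha b hb => ?_)
  rw [Submodule.mem_bot]
  refine S.form_nondeg _ fun c => ?_
  rw [S.compat, S.form_skew, hJperp ha _ (hJI b hb c), neg_zero]
end
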